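/- (Bring's reduction.) Let p, q, r ∈ ℂ with 15p + 20q ≠ 0, set α = (3p² − 10q − 25r)/(15p + 20q), and suppose ζ, γ ∈ ℂ satisfy (15p + 20q)·ζ + (15pα + 20q + 25r)·γ = −25rα + 15p² + 23pq and 10q·γ² + (15pζ − 15p²)·γ + 25rζ − 2q² − 20rp = 0. Let z₁, …, z₅ be the roots with multiplicity of X⁵ + pX² + qX + r over ℂ, and suppose d ∈ ℂ is such that, with a = (3pd + 4q)/5, b = αd + ζ, c = d + γ, the coefficient of Y² in T(Y) = ∏ᵢ₌₁⁵ (Y + zᵢ⁴ + d·zᵢ³ + c·zᵢ² + b·zᵢ + a) vanishes. Then T(Y) = Y⁵ + P·Y + Q for some P, Q ∈ ℂ; that is, the three intermediate terms of the quintic are simultaneously removed. -/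

import Mathlib

open Polynomial

/-- The Tschirnhaus transform `T(Y) = ∏ᵢ (Y + zᵢ⁴ + d·zᵢ³ + c·zᵢ² + b·zᵢ + a)`
of a quintic with roots `z₁, …, z₅`, given by the quartic subsidiary
equation `z⁴ + dz³ + cz² + bz + a + y = 0`. -/
noncomputable def bringQuinticTransform (a b c d z₁ z₂ z₃ z₄ z₅ : ℂ) :
    Polynomial ℂ :=
  (X + C (z₁ ^ 4 + d * z₁ ^ 3 + c * z₁ ^ 2 + b * z₁ + a)) *
  (X + C (z₂ ^ 4 + d * z₂ ^ 3 + c * z₂ ^ 2 + b * z₂ + a)) *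
  (X + C (z₃ ^ 4 + d * z₃ ^ 3 + c * z₃ ^ 2 + b * z₃ + a)) *
  (X + C (z₄ ^ 4 + d * z₄ ^ 3 + c * z₄ ^ 2 + b * z₄ + a)) *
  (X + C (z₅ ^ 4 + d * z₅ ^ 3 + c * z₅ ^ 2 + b * z₅ + a))

/-!
For a polynomial `f` with roots `zᵢ`, the transform `∏ᵢ (Y + g(zᵢ))` has second coefficient
`∑ g(zᵢ)` and third coefficient `((∑ g(zᵢ))² - ∑ g(zᵢ)²) / 2`, and Newton's identities turn both
sums into polynomials in the coefficients of `f` and `g`. For `f = X⁵ + pX² + qX + r` and a quartic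
`g`, the choice `5a = 3pd + 4q` makes the first sum vanish. After the substitution `b = αd + ζ`,
`c = d + γ` the second sum is quadratic in `d`, and its three coefficients are what the equations
for `α`, `ζ` and `γ` set to zero. So it vanishes identically, and `d` remains free to remove the
coefficient of `Y²`.
-/

section RootSum

variable {R : Type*} [CommRing R]

theorem divX_X : divX (X : R[X]) = 1 := by
  simpa using divX_X_pow (R := R) (n := 1)

theorem divX_eq_C_add_X_sub_C_mul_divX_divByMonic (f : R[X]) (z : R) :
    divX f = C ((f /ₘ (X - C z)).coeff 0) + (X - C z) * divX (f /ₘ (X - C z)) := by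
  have h : X * divX (f /ₘ (X - C z)) + C ((f /ₘ (X - C z)).coeff 0) = f /ₘ (X - C z) :=
    X_mul_divX_add _
  calc divX f = f /ₘ (X - C z) - C z * divX (f /ₘ (X - C z)) := by
        ext n
        rw [coeff_sub, coeff_C_mul, coeff_divX, coeff_divX, coeff_divByMonic_X_sub_C_rec,
          add_sub_cancel_right]
    _ = C ((f /ₘ (X - C z)).coeff 0) + (X - C z) * divX (f /ₘ (X - C z)) := by
        linear_combination -h

theorem divX_divByMonic_X_sub_C (f : R[X]) (z : R) :
    divX f /ₘ (X - C z) = divX (f /ₘ (X - C z)) := by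
  nontriviality R
  refine (div_modByMonic_unique _ (C ((f /ₘ (X - C z)).coeff 0)) (monic_X_sub_C z)
    ⟨(divX_eq_C_add_X_sub_C_mul_divX_divByMonic f z).symm, ?_⟩).1
  exact degree_C_le.trans_lt (by rw [degree_X_sub_C]; exact zero_lt_one)

theorem coeff_divByMonic_X_sub_C_eq_eval (f : R[X]) (z : R) (n : ℕ) :
    (f /ₘ (X - C z)).coeff n = (divX^[n + 1] f).eval z := by
  induction n generalizing f with
  | zero =>
    rw [zero_add, Function.iterate_one, divX_eq_C_add_X_sub_C_mul_divX_divByMonic f z]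
    simp only [eval_add, eval_C, eval_mul, eval_sub, eval_X, sub_self, zero_mul, add_zero]
  | succ n ih => rw [Function.iterate_succ_apply, ← ih, divX_divByMonic_X_sub_C, coeff_divX]

variable [IsDomain R]

/-- The sum `∑ g(zᵢ)` over the roots `zᵢ` of `f`, counted with multiplicity, as a linear functional
of `g`; on `X ^ k` it is the `k`-th power sum of the roots. -/
noncomputable def rootSum (f : R[X]) : R[X] →ₗ[R] R where
  toFun g := (f.roots.map fun z => g.eval z).sum
  map_add' g h := by simp only [eval_add, Multiset.sum_map_add]
  map_smul' t g := by
    simp only [eval_smul, smul_eq_mul, Multiset.sum_map_mul_left, RingHom.id_apply]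

theorem rootSum_apply (f g : R[X]) : rootSum f g = (f.roots.map fun z => g.eval z).sum := rfl

theorem rootSum_C_mul (f g : R[X]) (t : R) : rootSum f (C t * g) = t * rootSum f g := by
  rw [C_mul', map_smul, smul_eq_mul]

theorem rootSum_C (f : R[X]) (t : R) : rootSum f (C t) = f.roots.card * t := by
  simp only [rootSum_apply, eval_C, Multiset.map_const', Multiset.sum_replicate, nsmul_eq_mul]

theorem rootSum_eq_zero_of_dvd {f g : R[X]} (h : f ∣ g) : rootSum f g = 0 := by
  rw [rootSum_apply]
  refine Multiset.sum_eq_zero fun y hy => ?_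
  obtain ⟨z, hz, rfl⟩ := Multiset.mem_map.1 hy
  exact eval_eq_zero_of_dvd_of_eval_eq_zero h (isRoot_of_mem_roots hz)

theorem derivative_eq_sum_divByMonic_roots {f : R[X]} (hf : f.Splits) :
    derivative f = (f.roots.map fun z => f /ₘ (X - C z)).sum := by
  classical
  conv_lhs => rw [hf.eq_prod_roots, derivative_C_mul, derivative_prod]
  rw [← Multiset.sum_map_mul_left]
  refine congrArg _ (Multiset.map_congr rfl fun z hz => ?_)
  rw [derivative_X_sub_C, mul_one]
  conv_rhs => rw [hf.eq_prod_roots, ← Multiset.cons_erase hz, Multiset.map_cons,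
    Multiset.prod_cons, mul_left_comm, mul_divByMonic_cancel_left _ (monic_X_sub_C z)]

-- Newton's identities, read off the coefficient of `X ^ n` in `f' = ∑ f / (X - zᵢ)`.
theorem rootSum_iterate_divX {f : R[X]} (hf : f.Splits) (n : ℕ) :
    rootSum f (divX^[n + 1] f) = f.coeff (n + 1) * (n + 1) := by
  rw [← coeff_derivative, derivative_eq_sum_divByMonic_roots hf, ← lcoeff_apply,
    map_multiset_sum, Multiset.map_map]
  simp only [Function.comp_def, lcoeff_apply, coeff_divByMonic_X_sub_C_eq_eval, rootSum_apply]

end RootSum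

section TschirnhausTransform

theorem multiset_sum_sq_eq_sum_map_sq_add_two_mul_esymm_two {R : Type*} [CommSemiring R]
    (s : Multiset R) :
    s.sum ^ 2 = (s.map (· ^ 2)).sum + 2 * s.esymm 2 := by
  induction s using Multiset.induction with
  | empty => simp [Multiset.esymm, Multiset.powersetCard_zero_right]
  | cons x s ih =>
    have h : (x ::ₘ s).esymm 2 = s.esymm 2 + x * s.sum := by
      have mul_sum : (s.map (x * ·)).sum = x * s.sum := by
        rw [Multiset.sum_map_mul_left, Multiset.map_id']
      simp only [Multiset.esymm, Multiset.powersetCard_cons, Multiset.powersetCard_one,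
        Multiset.map_add, Multiset.map_map, Multiset.sum_add, Function.comp_def,
        Multiset.prod_cons, Multiset.prod_singleton, mul_sum]
    rw [h, Multiset.sum_cons, Multiset.map_cons, Multiset.sum_cons, add_sq, ih]
    ring

variable {R : Type*} [CommRing R] [IsDomain R]

/-- The Tschirnhaus transform `∏ᵢ (Y + g(zᵢ))` of `f` by the subsidiary equation `g(z) + y = 0`,
where `zᵢ` runs over the roots of `f`, counted with multiplicity. -/
noncomputable def tschirnhausTransform (f g : R[X]) : R[X] :=
  (f.roots.map fun z => X + C (g.eval z)).prod

theorem monic_tschirnhausTransform (f g : R[X]) : (tschirnhausTransform f g).Monic :=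
  monic_multiset_prod_of_monic _ _ fun _ _ => monic_X_add_C _

theorem natDegree_tschirnhausTransform (f g : R[X]) :
    (tschirnhausTransform f g).natDegree = f.roots.card := by
  rw [tschirnhausTransform, natDegree_multiset_prod_of_monic, Multiset.map_map]
  · simp
  · exact Multiset.forall_mem_map_iff.2 fun _ _ => monic_X_add_C _

variable {f : R[X]} {n : ℕ}

theorem coeff_tschirnhausTransform_of_card_eq_add_one (g : R[X]) (hn : f.roots.card = n + 1) :
    (tschirnhausTransform f g).coeff n = rootSum f g := by
  rw [tschirnhausTransform, Multiset.prod_X_add_C_coeff' _ _ (by omega), hn,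
    Nat.add_sub_cancel_left, rootSum_apply]
  simp [Multiset.esymm, Multiset.powersetCard_one]

theorem two_mul_coeff_tschirnhausTransform_of_card_eq_add_two (g : R[X])
    (hn : f.roots.card = n + 2) :
    2 * (tschirnhausTransform f g).coeff n = rootSum f g ^ 2 - rootSum f (g ^ 2) := by
  rw [tschirnhausTransform, Multiset.prod_X_add_C_coeff' _ _ (by omega), hn,
    Nat.add_sub_cancel_left, rootSum_apply, rootSum_apply,
    multiset_sum_sq_eq_sum_map_sq_add_two_mul_esymm_two, Multiset.map_map]
  simp only [Function.comp_apply, eval_pow, add_sub_cancel_left]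

end TschirnhausTransform

section PrincipalQuintic

variable {R : Type*} [CommRing R]

/-- The quintic `X⁵ + pX² + qX + r`, lacking its second and third terms (the principal form of a
quintic equation). -/
noncomputable def principalQuintic (p q r : R) : R[X] :=
  X ^ 5 + C p * X ^ 2 + C q * X + C r

/-- The quartic `X⁴ + dX³ + cX² + bX + a` of the subsidiary equation, with its coefficients in the
order used by `bringQuinticTransform`. -/
noncomputable def subsidiaryQuartic (a b c d : R) : R[X] :=
  X ^ 4 + C d * X ^ 3 + C c * X ^ 2 + C b * X + C a

theorem subsidiaryQuartic_sq (a b c d : R) :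
    subsidiaryQuartic a b c d ^ 2 = X ^ 8 + C (2 * d) * X ^ 7 + C (d ^ 2 + 2 * c) * X ^ 6 +
      C (2 * b + 2 * c * d) * X ^ 5 + C (2 * a + 2 * b * d + c ^ 2) * X ^ 4 +
      C (2 * a * d + 2 * b * c) * X ^ 3 + C (2 * a * c + b ^ 2) * X ^ 2 + C (2 * a * b) * X +
      C (a ^ 2) := by
  simp only [subsidiaryQuartic, map_add, map_mul, map_pow, map_ofNat]
  ring

variable (p q r : R)

theorem natDegree_principalQuintic [Nontrivial R] : (principalQuintic p q r).natDegree = 5 := by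
  unfold principalQuintic
  compute_degree!

variable {p q r} [IsDomain R]

theorem card_roots_principalQuintic (hf : (principalQuintic p q r).Splits) :
    (principalQuintic p q r).roots.card = 5 := by
  rw [← hf.natDegree_eq_card_roots, natDegree_principalQuintic]

theorem rootSum_principalQuintic_C (hf : (principalQuintic p q r).Splits) (t : R) :
    rootSum (principalQuintic p q r) (C t) = 5 * t := by
  rw [rootSum_C, card_roots_principalQuintic hf, Nat.cast_ofNat]

theorem rootSum_principalQuintic_X (hf : (principalQuintic p q r).Splits) :
    rootSum (principalQuintic p q r) X = 0 := by
  have tail : divX^[4] (principalQuintic p q r) = X := by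
    simp [principalQuintic, divX_add, divX_C_mul, divX_X_pow, divX_X]
  rw [← tail, rootSum_iterate_divX hf]
  simp [principalQuintic]

theorem rootSum_principalQuintic_X_sq (hf : (principalQuintic p q r).Splits) :
    rootSum (principalQuintic p q r) (X ^ 2) = 0 := by
  have tail : divX^[3] (principalQuintic p q r) = X ^ 2 := by
    simp [principalQuintic, divX_add, divX_C_mul, divX_X_pow, divX_X]
  rw [← tail, rootSum_iterate_divX hf]
  simp [principalQuintic]

theorem rootSum_principalQuintic_X_pow_three (hf : (principalQuintic p q r).Splits) :
    rootSum (principalQuintic p q r) (X ^ 3) = -3 * p := by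
  have tail : divX^[2] (principalQuintic p q r) = X ^ 3 + C p := by
    simp [principalQuintic, divX_add, divX_C_mul, divX_X_pow, divX_X]
  have newton := rootSum_iterate_divX hf 1
  rw [tail, map_add, rootSum_principalQuintic_C hf] at newton
  have coeff_two : (principalQuintic p q r).coeff 2 = p := by
    simp [principalQuintic]
  rw [coeff_two, Nat.cast_one] at newton
  linear_combination newton

theorem rootSum_principalQuintic_X_pow_four (hf : (principalQuintic p q r).Splits) :
    rootSum (principalQuintic p q r) (X ^ 4) = -4 * q := by
  have tail : divX (principalQuintic p q r) = X ^ 4 + C p * X + C q := by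
    simp [principalQuintic, divX_add, divX_C_mul, divX_X_pow, divX_X]
  have newton := rootSum_iterate_divX hf 0
  rw [zero_add, Function.iterate_one, tail, map_add, map_add, rootSum_C_mul,
    rootSum_principalQuintic_X hf, rootSum_principalQuintic_C hf] at newton
  have coeff_one : (principalQuintic p q r).coeff 1 = q := by
    simp [principalQuintic, coeff_C]
  rw [coeff_one, Nat.cast_zero] at newton
  linear_combination newton

theorem rootSum_principalQuintic_X_pow_add_five (k : ℕ) :
    rootSum (principalQuintic p q r) (X ^ (k + 5)) =
      -(p * rootSum (principalQuintic p q r) (X ^ (k + 2)) +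
        q * rootSum (principalQuintic p q r) (X ^ (k + 1)) +
        r * rootSum (principalQuintic p q r) (X ^ k)) := by
  have h := rootSum_eq_zero_of_dvd (dvd_mul_right (principalQuintic p q r) (X ^ k))
  have expand : principalQuintic p q r * X ^ k =
      X ^ (k + 5) + C p * X ^ (k + 2) + C q * X ^ (k + 1) + C r * X ^ k := by
    rw [principalQuintic]
    ring
  simp only [expand, map_add, rootSum_C_mul] at h
  linear_combination h

theorem rootSum_principalQuintic_subsidiaryQuartic (hf : (principalQuintic p q r).Splits)
    (a b c d : R) :
    rootSum (principalQuintic p q r) (subsidiaryQuartic a b c d) = 5 * a - 3 * p * d - 4 * q := by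
  simp only [subsidiaryQuartic, LinearMap.map_add, rootSum_C_mul, rootSum_principalQuintic_C hf,
    rootSum_principalQuintic_X hf, rootSum_principalQuintic_X_sq hf,
    rootSum_principalQuintic_X_pow_three hf, rootSum_principalQuintic_X_pow_four hf]
  ring

theorem rootSum_principalQuintic_subsidiaryQuartic_sq (hf : (principalQuintic p q r).Splits)
    (a b c d : R) :
    rootSum (principalQuintic p q r) (subsidiaryQuartic a b c d ^ 2) =
      8 * p * r + 4 * q ^ 2 + 14 * p * q * d + 3 * p ^ 2 * (d ^ 2 + 2 * c) -
        10 * r * (b + c * d) - 4 * q * (2 * a + 2 * b * d + c ^ 2) - 6 * p * (a * d + b * c) +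
        5 * a ^ 2 := by
  have five := rootSum_principalQuintic_X_pow_add_five (p := p) (q := q) (r := r) 0
  have six := rootSum_principalQuintic_X_pow_add_five (p := p) (q := q) (r := r) 1
  have seven := rootSum_principalQuintic_X_pow_add_five (p := p) (q := q) (r := r) 2
  have eight := rootSum_principalQuintic_X_pow_add_five (p := p) (q := q) (r := r) 3
  simp only [Nat.reduceAdd, pow_zero, pow_one, ← C_1] at five six seven eight
  simp only [subsidiaryQuartic_sq, LinearMap.map_add, rootSum_C_mul, rootSum_principalQuintic_C hf,
    rootSum_principalQuintic_X hf, rootSum_principalQuintic_X_sq hf,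
    rootSum_principalQuintic_X_pow_three hf, rootSum_principalQuintic_X_pow_four hf,
    five, six, seven, eight]
  ring

end PrincipalQuintic

section BringReduction

theorem eq_X_pow_five_add_of_coeff_eq_zero {R : Type*} [CommSemiring R] {T : R[X]}
    (hT : T.Monic) (hdeg : T.natDegree = 5) (h4 : T.coeff 4 = 0) (h3 : T.coeff 3 = 0)
    (h2 : T.coeff 2 = 0) :
    T = X ^ 5 + C (T.coeff 1) * X + C (T.coeff 0) := by
  conv_lhs => rw [hT.as_sum, hdeg]
  simp only [Finset.sum_range_succ, Finset.sum_range_zero, h4, h3, h2, C_0]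
  ring

variable {R : Type*} [CommRing R] [IsDomain R] {p q r α ζ γ d a b c : R}

theorem five_mul_rootSum_subsidiaryQuartic_sq (hf : (principalQuintic p q r).Splits)
    (ha : 5 * a = 3 * p * d + 4 * q) (hb : b = α * d + ζ) (hc : c = d + γ) :
    5 * rootSum (principalQuintic p q r) (subsidiaryQuartic a b c d ^ 2) =
      -2 * (((15 * p + 20 * q) * α - (3 * p ^ 2 - 10 * q - 25 * r)) * d ^ 2 +
        ((15 * p + 20 * q) * ζ + (15 * p * α + 20 * q + 25 * r) * γ -
          (-25 * r * α + 15 * p ^ 2 + 23 * p * q)) * d +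
        (10 * q * γ ^ 2 + (15 * p * ζ - 15 * p ^ 2) * γ + 25 * r * ζ - 2 * q ^ 2 -
          20 * r * p)) := by
  rw [rootSum_principalQuintic_subsidiaryQuartic_sq hf, hb, hc]
  linear_combination (5 * a - 3 * p * d - 4 * q) * ha

theorem bring_reduction_general (h_two : (2 : R) ≠ 0) (h_five : (5 : R) ≠ 0)
    (hf : (principalQuintic p q r).Splits)
    (hα : (15 * p + 20 * q) * α = 3 * p ^ 2 - 10 * q - 25 * r)
    (hlin : (15 * p + 20 * q) * ζ + (15 * p * α + 20 * q + 25 * r) * γ =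
      -25 * r * α + 15 * p ^ 2 + 23 * p * q)
    (hquad : 10 * q * γ ^ 2 + (15 * p * ζ - 15 * p ^ 2) * γ + 25 * r * ζ -
      2 * q ^ 2 - 20 * r * p = 0)
    (ha : 5 * a = 3 * p * d + 4 * q) (hb : b = α * d + ζ) (hc : c = d + γ)
    (hd : (tschirnhausTransform (principalQuintic p q r)
      (subsidiaryQuartic a b c d)).coeff 2 = 0) :
    ∃ P Q : R, tschirnhausTransform (principalQuintic p q r) (subsidiaryQuartic a b c d) =
      X ^ 5 + C P * X + C Q := by
  have card_roots := card_roots_principalQuintic hf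
  have sum_eq_zero : rootSum (principalQuintic p q r) (subsidiaryQuartic a b c d) = 0 := by
    rw [rootSum_principalQuintic_subsidiaryQuartic hf]
    linear_combination ha
  have sum_sq_eq_zero :
      rootSum (principalQuintic p q r) (subsidiaryQuartic a b c d ^ 2) = 0 := by
    refine (mul_eq_zero_iff_left h_five).1 ?_
    rw [five_mul_rootSum_subsidiaryQuartic_sq hf ha hb hc]
    linear_combination -2 * d ^ 2 * hα - 2 * d * hlin - 2 * hquad
  have coeff_four := coeff_tschirnhausTransform_of_card_eq_add_one (subsidiaryQuartic a b c d)
    card_roots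
  have coeff_three := two_mul_coeff_tschirnhausTransform_of_card_eq_add_two
    (subsidiaryQuartic a b c d) card_roots
  rw [sum_eq_zero] at coeff_four coeff_three
  rw [sum_sq_eq_zero, zero_pow (by norm_num), sub_zero] at coeff_three
  exact ⟨_, _, eq_X_pow_five_add_of_coeff_eq_zero (monic_tschirnhausTransform _ _)
    ((natDegree_tschirnhausTransform _ _).trans card_roots) coeff_four
    ((mul_eq_zero_iff_left h_two).1 coeff_three) hd⟩

theorem tschirnhausTransform_subsidiaryQuartic_eq_bringQuinticTransform {f : ℂ[X]}
    {z₁ z₂ z₃ z₄ z₅ : ℂ} (hroots : f.roots = {z₁, z₂, z₃, z₄, z₅}) (a b c d : ℂ) :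
    tschirnhausTransform f (subsidiaryQuartic a b c d) =
      bringQuinticTransform a b c d z₁ z₂ z₃ z₄ z₅ := by
  simp [tschirnhausTransform, hroots, subsidiaryQuartic, bringQuinticTransform, mul_assoc]

end BringReduction

/-- Bring's reduction (§XI): with `α, ζ, γ` chosen by solving equations of
degree at most two, and `d` chosen so that the coefficient of `Y²` of the
transform vanishes, the quartic Tschirnhaus transform of `X⁵ + pX² + qX + r`
with `a = (3pd + 4q)/5`, `b = αd + ζ`, `c = d + γ` takes the Bring–Jerrard
form `Y⁵ + P·Y + Q`. -/
theorem bring_reduction (p q r : ℂ) (hden : 15 * p + 20 * q ≠ 0) (α : ℂ)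
    (hα : α = (3 * p ^ 2 - 10 * q - 25 * r) / (15 * p + 20 * q)) (ζ γ : ℂ)
    (hlin : (15 * p + 20 * q) * ζ + (15 * p * α + 20 * q + 25 * r) * γ =
      -25 * r * α + 15 * p ^ 2 + 23 * p * q)
    (hquad : 10 * q * γ ^ 2 + (15 * p * ζ - 15 * p ^ 2) * γ + 25 * r * ζ -
      2 * q ^ 2 - 20 * r * p = 0)
    (z₁ z₂ z₃ z₄ z₅ : ℂ)
    (hroots : (X ^ 5 + C p * X ^ 2 + C q * X + C r).roots =
      {z₁, z₂, z₃, z₄, z₅})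
    (d a b c : ℂ) (ha : a = (3 * p * d + 4 * q) / 5) (hb : b = α * d + ζ)
    (hc : c = d + γ)
    (hd : (bringQuinticTransform a b c d z₁ z₂ z₃ z₄ z₅).coeff 2 = 0) :
    ∃ P Q : ℂ,
      bringQuinticTransform a b c d z₁ z₂ z₃ z₄ z₅ =
        X ^ 5 + C P * X + C Q := by
  rw [← tschirnhausTransform_subsidiaryQuartic_eq_bringQuinticTransform hroots] at hd ⊢
  exact bring_reduction_general (by norm_num) (by norm_num) (IsAlgClosed.splits _)
    (by rw [hα, mul_div_cancel₀ _ hden]) hlin hquad (by rw [ha]; ring) hb hc hd
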